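/- For every odd integer ℓ ≥ 1, 2^{1−2ℓ}(ℓ−1)!/Γ((ℓ+1)/2)² = (−1)^{(ℓ−1)/2} B_{ℓ−1}^{(ℓ)}(ℓ/2)/(2(ℓ−1)!), and for every even integer ℓ ≥ 2, 2^{1−2ℓ}(ℓ−1)!/Γ((ℓ+1)/2)² = (−1)^{ℓ/2+1} B_{ℓ−2}^{(ℓ)}(ℓ/2)/(2π(ℓ−2)!). -/

import Mathlib

/-!
Put `A w = w / (2 sinh (w/2))`, so that `(w/(e^w-1))^r e^{rw/2} = A^r`. With `c = cosh (w/2)` one has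
`w A' = A - c A²`, hence the powers of `A` satisfy two first-order differential equations,
`w (A^r)' = r A^r - r c A^{r+1}` and
`w (c A^{r+1})' = (r+1) c A^{r+1} - (r+1) A^{r+2} - (r/4) w² A^r`
(`euler_pow`, `euler_cosh_pow`). The operator `w d/dw` multiplies the `n`-th derivative at `0` by `n`,
so the second equation at `n = r+1`, and both equations at `n = r`, give recursions `r ↦ r+2` for the
coefficients of order `r-1` and of order `r-2` of `A^r` (`odd_step`, `even_step`). They are the
recursion `𝒞_{ℓ+2} = ℓ/(4(ℓ+1)) 𝒞_ℓ` that comes from `Γ(s+1) = s Γ(s)`, up to the alternating sign, and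
the initial values at `ℓ = 1` and `ℓ = 2` agree.
-/


open Complex Real Filter Topology

/-- The generating function `w ↦ (w/(e^w-1))^r e^{xw}` of the Bernoulli polynomials of
order `r`, with the removable singularity at `w = 0` filled in by its value `1`. -/
noncomputable def bernGen (r : ℕ) (x : ℂ) (w : ℂ) : ℂ :=
  if w = 0 then 1 else (w / (Complex.exp w - 1)) ^ r * Complex.exp (x * w)

/-- The Bernoulli polynomial of order `r`, `B_n^{(r)}(x)`: `n!` times the `n`-th Taylor
coefficient of `w ↦ (w/(e^w-1))^r e^{xw}` at `w = 0`. -/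
noncomputable def genBernoulli (n r : ℕ) (x : ℂ) : ℂ :=
  (Nat.factorial n : ℂ) * (iteratedDeriv n (bernGen r x) 0 / (Nat.factorial n : ℂ))

/-- The constant `𝒞_ℓ = 2^{1-2ℓ} (ℓ-1)! / Γ((ℓ+1)/2)²`. -/
noncomputable def Cconst (ℓ : ℕ) : ℝ :=
  2 ^ (1 - 2 * (ℓ : ℤ)) * (Nat.factorial (ℓ - 1)) / Real.Gamma (((ℓ : ℝ) + 1) / 2) ^ 2

/-- `A w = w / (2 sinh (w/2))`, with value `1` at `0`. -/
noncomputable def sinhGen : ℂ → ℂ := bernGen 1 (1 / 2)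

lemma bernGen_eq_pow (r : ℕ) : bernGen r ((r : ℂ) / 2) = fun w => sinhGen w ^ r := by
  funext w
  unfold sinhGen bernGen
  split_ifs with h
  · simp
  · rw [mul_pow, pow_one, ← Complex.exp_nat_mul]
    congr 2
    ring

lemma sinhGen_zero : sinhGen 0 = 1 := by simp [sinhGen, bernGen]

lemma analyticAt_sinhGen : AnalyticAt ℂ sinhGen 0 := by
  have h1 : AnalyticAt ℂ (dslope Complex.exp 0) 0 := by
    have hd : Differentiable ℂ (dslope Complex.exp 0) := by
      rw [← differentiableOn_univ]
      exact (Complex.differentiableOn_dslope Filter.univ_mem).2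
        Complex.differentiable_exp.differentiableOn
    exact hd.analyticAt 0
  have h0 : dslope Complex.exp 0 0 ≠ 0 := by simp [dslope_same]
  have h2 : AnalyticAt ℂ (fun w : ℂ => (dslope Complex.exp 0 w)⁻¹ * Complex.exp (1 / 2 * w)) 0 :=
    (h1.inv h0).mul (by fun_prop)
  convert h2 using 1
  funext w
  unfold sinhGen bernGen
  split_ifs with h
  · simp [h, dslope_same]
  · rw [dslope_of_ne _ h]
    simp [slope, div_eq_mul_inv, mul_comm]

/-- The relation `2 sinh (w/2) A = w`; it needs `w` near `0` because `A` takes a junk value at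
the other zeros of `e^w - 1`. -/
lemma sinh_mul_sinhGen : ∀ᶠ w in 𝓝 (0 : ℂ), 2 * Complex.sinh (w / 2) * sinhGen w = w := by
  have hne : ∀ᶠ w in 𝓝 (0 : ℂ), sinhGen w ≠ 0 :=
    analyticAt_sinhGen.continuousAt.eventually_ne (by simp [sinhGen_zero])
  filter_upwards [hne] with w hw
  by_cases h : w = 0
  · simp [h]
  -- where `e^w = 1` with `w ≠ 0`, the junk value of the quotient makes `A` vanish
  have hE : Complex.exp w - 1 ≠ 0 := by
    intro h0
    apply hw
    simp [sinhGen, bernGen, h, h0]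
  have hs : 2 * Complex.sinh (w / 2) * Complex.exp (1 / 2 * w) = Complex.exp w - 1 := by
    rw [Complex.two_sinh, sub_mul, ← Complex.exp_add, ← Complex.exp_add]
    ring_nf
    simp only [Complex.exp_zero]
    ring
  have : sinhGen w = w / (Complex.exp w - 1) * Complex.exp (1 / 2 * w) := by
    simp [sinhGen, bernGen, h]
  rw [this]
  calc _ = w / (Complex.exp w - 1) * (2 * Complex.sinh (w / 2) * Complex.exp (1 / 2 * w)) := by ring
    _ = w := by rw [hs]; field_simp

lemma hasDerivAt_sinh_half (w : ℂ) :
    HasDerivAt (fun w : ℂ => 2 * Complex.sinh (w / 2)) (Complex.cosh (w / 2)) w := by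
  have := (((hasDerivAt_id' w).div_const 2).csinh).const_mul 2
  exact this.congr_deriv (by ring)

lemma hasDerivAt_cosh_half (w : ℂ) :
    HasDerivAt (fun w : ℂ => Complex.cosh (w / 2)) (Complex.sinh (w / 2) / 2) w := by
  have := ((hasDerivAt_id' w).div_const 2).ccosh
  exact this.congr_deriv (by ring)

lemma euler_sinhGen : ∀ᶠ w in 𝓝 (0 : ℂ),
    w * deriv sinhGen w = sinhGen w - Complex.cosh (w / 2) * sinhGen w ^ 2 := by
  filter_upwards [sinh_mul_sinhGen.eventually_nhds, analyticAt_sinhGen.eventually_analyticAt]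
    with w hw ha
  have h1 := (hasDerivAt_sinh_half w).fun_mul ha.differentiableAt.hasDerivAt
  have h2 := (hasDerivAt_id w).congr_of_eventuallyEq (f₁ := fun w => 2 * Complex.sinh (w / 2) * sinhGen w) hw
  have h3 := h1.unique h2
  have h4 := hw.self_of_nhds
  linear_combination sinhGen w * h3 - deriv sinhGen w * h4

lemma euler_pow (r : ℕ) :
    (fun w => w * deriv (fun w => sinhGen w ^ r) w) =ᶠ[𝓝 0] fun w =>
      r * sinhGen w ^ r - r * (Complex.cosh (w / 2) * sinhGen w ^ (r + 1)) := by
  filter_upwards [euler_sinhGen, analyticAt_sinhGen.eventually_analyticAt] with w hw ha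
  rw [(ha.differentiableAt.hasDerivAt.fun_pow r).deriv]
  rcases r with _ | r
  · simp
  · simp only [Nat.add_sub_cancel]
    linear_combination ((r + 1 : ℕ) : ℂ) * sinhGen w ^ r * hw

lemma euler_cosh_pow (r : ℕ) :
    (fun w => w * deriv (fun w => Complex.cosh (w / 2) * sinhGen w ^ (r + 1)) w) =ᶠ[𝓝 0] fun w =>
      (r + 1) * (Complex.cosh (w / 2) * sinhGen w ^ (r + 1)) - (r + 1) * sinhGen w ^ (r + 2)
        - r / 4 * (w * (w * sinhGen w ^ r)) := by
  filter_upwards [euler_sinhGen, sinh_mul_sinhGen, analyticAt_sinhGen.eventually_analyticAt]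
    with w hw hs ha
  rw [((hasDerivAt_cosh_half w).fun_mul (ha.differentiableAt.hasDerivAt.fun_pow (r + 1))).deriv]
  have hc := Complex.cosh_sq (w / 2)
  simp only [Nat.add_sub_cancel]
  push_cast
  set A := sinhGen w
  set c := Complex.cosh (w / 2)
  set s := Complex.sinh (w / 2)
  linear_combination (r + 1) * c * A ^ r * hw + w * A ^ r / 4 * hs
    - (r + 1) * A ^ (r + 2) * hc - (r + 1) / 4 * A ^ r * (2 * s * A + w) * hs

lemma analyticAt_id_mul {f : ℂ → ℂ} (hf : AnalyticAt ℂ f 0) :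
    AnalyticAt ℂ (fun w => w * f w) 0 :=
  analyticAt_id.fun_mul hf

/-- Multiplication by `w` shifts Taylor coefficients. -/
lemma iteratedDeriv_id_mul (n : ℕ) : ∀ f : ℂ → ℂ, AnalyticAt ℂ f 0 →
    iteratedDeriv (n + 1) (fun w => w * f w) 0 = (n + 1) * iteratedDeriv n f 0 := by
  induction n with
  | zero =>
    intro f hf
    have := (hasDerivAt_id (0 : ℂ)).fun_mul hf.differentiableAt.hasDerivAt
    simpa using this.deriv
  | succ n ih =>
    intro f hf
    have h : deriv (fun w => w * f w) =ᶠ[𝓝 0] fun w => f w + w * deriv f w := by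
      filter_upwards [hf.eventually_analyticAt] with w ha
      simpa using ((hasDerivAt_id w).fun_mul ha.differentiableAt.hasDerivAt).deriv
    rw [iteratedDeriv_succ', h.iteratedDeriv_eq,
      iteratedDeriv_fun_add hf.contDiffAt (analyticAt_id_mul hf.deriv).contDiffAt,
      ih _ hf.deriv, ← iteratedDeriv_succ']
    push_cast
    ring

/-- The Euler operator `w d/dw` acts on Taylor coefficients of order `n` as multiplication by `n`. -/
lemma iteratedDeriv_euler (n : ℕ) (f : ℂ → ℂ) (hf : AnalyticAt ℂ f 0) :
    iteratedDeriv n (fun w => w * deriv f w) 0 = n * iteratedDeriv n f 0 := by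
  rcases n with _ | n
  · simp
  · rw [iteratedDeriv_id_mul n _ hf.deriv, ← iteratedDeriv_succ']
    push_cast
    ring

lemma analyticAt_sinhGen_pow (r : ℕ) : AnalyticAt ℂ (fun w => sinhGen w ^ r) 0 :=
  analyticAt_sinhGen.pow r

lemma analyticAt_cosh_pow (r : ℕ) :
    AnalyticAt ℂ (fun w => Complex.cosh (w / 2) * sinhGen w ^ r) 0 := by
  have h : AnalyticAt ℂ (fun w : ℂ => Complex.cosh (w / 2)) 0 := by
    have hd : Differentiable ℂ (fun w : ℂ => Complex.cosh (w / 2)) :=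
      fun w => (hasDerivAt_cosh_half w).differentiableAt
    exact hd.analyticAt 0
  exact h.mul (analyticAt_sinhGen_pow r)

lemma coeff_euler_pow (n r : ℕ) :
    (n : ℂ) * iteratedDeriv n (fun w => sinhGen w ^ r) 0 =
      r * iteratedDeriv n (fun w => sinhGen w ^ r) 0
      - r * iteratedDeriv n (fun w => Complex.cosh (w / 2) * sinhGen w ^ (r + 1)) 0 := by
  rw [← iteratedDeriv_euler n _ (analyticAt_sinhGen_pow r),
    (euler_pow r).iteratedDeriv_eq]
  have h1 := analyticAt_sinhGen_pow r
  have h2 := analyticAt_cosh_pow (r + 1)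
  rw [iteratedDeriv_fun_sub (analyticAt_const.fun_mul h1).contDiffAt
    (analyticAt_const.fun_mul h2).contDiffAt, iteratedDeriv_const_mul_field,
    iteratedDeriv_const_mul_field]

lemma coeff_euler_cosh_pow (n r : ℕ) :
    (n : ℂ) * iteratedDeriv n (fun w => Complex.cosh (w / 2) * sinhGen w ^ (r + 1)) 0 =
      (r + 1) * iteratedDeriv n (fun w => Complex.cosh (w / 2) * sinhGen w ^ (r + 1)) 0
      - (r + 1) * iteratedDeriv n (fun w => sinhGen w ^ (r + 2)) 0
      - r / 4 * iteratedDeriv n (fun w => w * (w * sinhGen w ^ r)) 0 := by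
  rw [← iteratedDeriv_euler n _ (analyticAt_cosh_pow (r + 1)),
    (euler_cosh_pow r).iteratedDeriv_eq]
  have h1 := analyticAt_sinhGen_pow (r + 2)
  have h2 := analyticAt_cosh_pow (r + 1)
  have h3 : AnalyticAt ℂ (fun w => w * (w * sinhGen w ^ r)) 0 :=
    analyticAt_id_mul (analyticAt_id_mul (analyticAt_sinhGen_pow r))
  have c1 := (analyticAt_const (v := (r + 1 : ℂ))).fun_mul h2
  have c2 := (analyticAt_const (v := (r + 1 : ℂ))).fun_mul h1
  have c3 := (analyticAt_const (v := (r / 4 : ℂ))).fun_mul h3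
  rw [iteratedDeriv_fun_sub (c1.fun_sub c2).contDiffAt c3.contDiffAt,
    iteratedDeriv_fun_sub c1.contDiffAt c2.contDiffAt, iteratedDeriv_const_mul_field,
    iteratedDeriv_const_mul_field, iteratedDeriv_const_mul_field]

lemma iteratedDeriv_sq_mul (n r : ℕ) :
    iteratedDeriv (n + 2) (fun w => w * (w * sinhGen w ^ r)) 0 =
      (n + 2) * (n + 1) * iteratedDeriv n (fun w => sinhGen w ^ r) 0 := by
  rw [iteratedDeriv_id_mul (n + 1) _ (analyticAt_id_mul (analyticAt_sinhGen_pow r)),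
    iteratedDeriv_id_mul n _ (analyticAt_sinhGen_pow r)]
  push_cast
  ring

/-- Recursion for the coefficient of order `r - 1` of `A^r`, with `r = k + 1`. -/
lemma odd_step (k : ℕ) :
    iteratedDeriv (k + 2) (fun w => sinhGen w ^ (k + 3)) 0 =
      -((k + 1) ^ 2 / 4) * iteratedDeriv k (fun w => sinhGen w ^ (k + 1)) 0 := by
  have h := coeff_euler_cosh_pow (k + 2) (k + 1)
  rw [iteratedDeriv_sq_mul] at h
  have hk : (k + 2 : ℂ) ≠ 0 := by exact_mod_cast (show k + 2 ≠ 0 by lia)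
  apply mul_left_cancel₀ hk
  push_cast at h
  linear_combination h

/-- Recursion for the coefficient of order `r - 2` of `A^r`, with `r = k + 2`. -/
lemma even_step (k : ℕ) :
    iteratedDeriv (k + 2) (fun w => sinhGen w ^ (k + 4)) 0 =
      -((k + 2) ^ 2 * (k + 1) / (4 * (k + 3))) *
        iteratedDeriv k (fun w => sinhGen w ^ (k + 2)) 0 := by
  have hk : (k + 2 : ℂ) ≠ 0 := by exact_mod_cast (show k + 2 ≠ 0 by lia)
  have hk3 : (k + 3 : ℂ) ≠ 0 := by exact_mod_cast (show k + 3 ≠ 0 by lia)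
  have hG : iteratedDeriv (k + 2) (fun w => Complex.cosh (w / 2) * sinhGen w ^ (k + 2 + 1)) 0 = 0 := by
    have h := coeff_euler_pow (k + 2) (k + 2)
    apply mul_left_cancel₀ hk
    push_cast at h
    linear_combination h
  have h := coeff_euler_cosh_pow (k + 2) (k + 2)
  rw [iteratedDeriv_sq_mul, hG] at h
  push_cast at h
  field_simp
  linear_combination 4 * h

lemma Cconst_step (ℓ : ℕ) :
    Cconst (ℓ + 3) = (ℓ + 1) / (4 * (ℓ + 2)) * Cconst (ℓ + 1) := by
  unfold Cconst
  have hs : ((ℓ : ℝ) + 2) / 2 ≠ 0 := by positivity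
  have hG : Real.Gamma (((ℓ : ℝ) + 2) / 2) ≠ 0 := (Real.Gamma_pos_of_pos (by positivity)).ne'
  have e1 : (((ℓ + 3 : ℕ) : ℝ) + 1) / 2 = ((ℓ : ℝ) + 2) / 2 + 1 := by push_cast; ring
  have e2 : (((ℓ + 1 : ℕ) : ℝ) + 1) / 2 = ((ℓ : ℝ) + 2) / 2 := by push_cast; ring
  have e3 : (2 : ℝ) ^ (1 - 2 * ((ℓ + 3 : ℕ) : ℤ)) = 2 ^ (1 - 2 * ((ℓ + 1 : ℕ) : ℤ)) / 16 := by
    rw [show 1 - 2 * ((ℓ + 3 : ℕ) : ℤ) = 1 - 2 * ((ℓ + 1 : ℕ) : ℤ) - 4 by push_cast; ring,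
      zpow_sub₀ (by norm_num)]
    norm_num
  rw [e1, e2, e3, Real.Gamma_add_one hs, show ℓ + 3 - 1 = ℓ + 1 + 1 by lia,
    show ℓ + 1 - 1 = ℓ by lia, Nat.factorial_succ, Nat.factorial_succ]
  push_cast
  field_simp
  ring

lemma genBernoulli_half (n r : ℕ) :
    genBernoulli n r ((r : ℂ) / 2) = iteratedDeriv n (fun w => sinhGen w ^ r) 0 := by
  have : (n.factorial : ℂ) ≠ 0 := by exact_mod_cast n.factorial_ne_zero
  rw [genBernoulli, bernGen_eq_pow]
  field_simp

lemma odd_case (m : ℕ) : ((Cconst (2 * m + 1) : ℝ) : ℂ) =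
    (-1 : ℂ) ^ m * iteratedDeriv (2 * m) (fun w => sinhGen w ^ (2 * m + 1)) 0 /
      (2 * ((2 * m).factorial : ℂ)) := by
  induction m with
  | zero =>
    have : Cconst 1 = 1 / 2 := by norm_num [Cconst]
    simp [this, sinhGen_zero]
  | succ m ih =>
    have hf : ((2 * m).factorial : ℂ) ≠ 0 := by exact_mod_cast (2 * m).factorial_ne_zero
    have h1 : (2 * (m : ℂ) + 1) ≠ 0 := by exact_mod_cast (show 2 * m + 1 ≠ 0 by lia)
    have h2 : (2 * (m : ℂ) + 2) ≠ 0 := by exact_mod_cast (show 2 * m + 2 ≠ 0 by lia)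
    rw [show 2 * (m + 1) = 2 * m + 2 by ring, show 2 * m + 2 + 1 = 2 * m + 3 by ring,
      Cconst_step, odd_step, Nat.factorial_succ, Nat.factorial_succ, pow_succ]
    push_cast
    rw [ih, show (2 * (m : ℂ) + 1 + 1) = 2 * m + 2 by ring]
    field_simp

lemma even_case (m : ℕ) : ((Cconst (2 * m + 2) : ℝ) : ℂ) =
    (-1 : ℂ) ^ m * iteratedDeriv (2 * m) (fun w => sinhGen w ^ (2 * m + 2)) 0 /
      (2 * ↑π * ((2 * m).factorial : ℂ)) := by
  have hp : (π : ℂ) ≠ 0 := by exact_mod_cast Real.pi_ne_zero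
  induction m with
  | zero =>
    have : Cconst 2 = 1 / (2 * π) := by
      have hG : Real.Gamma (((2 : ℕ) + 1 : ℝ) / 2) = √π / 2 := by
        rw [show ((2 : ℕ) + 1 : ℝ) / 2 = 1 / 2 + 1 by norm_num,
          Real.Gamma_add_one (by norm_num), Real.Gamma_one_half_eq]
        ring
      rw [Cconst, hG, div_pow, Real.sq_sqrt Real.pi_pos.le]
      norm_num
      field_simp
      norm_num
    simp [this, sinhGen_zero]
  | succ m ih =>
    have hf : ((2 * m).factorial : ℂ) ≠ 0 := by exact_mod_cast (2 * m).factorial_ne_zero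
    have h1 : (2 * (m : ℂ) + 1) ≠ 0 := by exact_mod_cast (show 2 * m + 1 ≠ 0 by lia)
    have h2 : (2 * (m : ℂ) + 2) ≠ 0 := by exact_mod_cast (show 2 * m + 2 ≠ 0 by lia)
    have h3 : (2 * (m : ℂ) + 3) ≠ 0 := by exact_mod_cast (show 2 * m + 3 ≠ 0 by lia)
    rw [show 2 * (m + 1) + 2 = (2 * m + 1) + 3 by ring, Cconst_step,
      show 2 * m + 1 + 3 = 2 * m + 4 by ring, show 2 * (m + 1) = 2 * m + 2 by ring,
      even_step, Nat.factorial_succ, Nat.factorial_succ, pow_succ,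
      show 2 * m + 1 + 1 = 2 * m + 2 by ring]
    push_cast
    rw [ih, show (2 * (m : ℂ) + 1 + 1) = 2 * m + 2 by ring,
      show (2 * (m : ℂ) + 1 + 2) = 2 * m + 3 by ring]
    field_simp

/-- `𝒞_ℓ = 𝒞_ℓ^*` (Proposition A.1 of the paper). -/
theorem stmt10 :
    (∀ ℓ : ℕ, Odd ℓ → 1 ≤ ℓ →
      ((Cconst ℓ : ℝ) : ℂ) =
        (-1 : ℂ) ^ ((ℓ - 1) / 2) * genBernoulli (ℓ - 1) ℓ ((ℓ : ℂ) / 2) /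
          (2 * (Nat.factorial (ℓ - 1) : ℂ))) ∧
    (∀ ℓ : ℕ, Even ℓ → 2 ≤ ℓ →
      ((Cconst ℓ : ℝ) : ℂ) =
        (-1 : ℂ) ^ (ℓ / 2 + 1) * genBernoulli (ℓ - 2) ℓ ((ℓ : ℂ) / 2) /
          (2 * ↑π * (Nat.factorial (ℓ - 2) : ℂ))) := by
  refine ⟨fun ℓ hℓ _ => ?_, fun ℓ hℓ h2 => ?_⟩
  · obtain ⟨m, rfl⟩ := hℓ
    rw [genBernoulli_half, odd_case, show 2 * m + 1 - 1 = 2 * m by lia,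
      show 2 * m / 2 = m by lia]
  · obtain ⟨m, rfl⟩ : ∃ m, ℓ = 2 * m + 2 := by
      obtain ⟨k, rfl⟩ := hℓ
      exact ⟨k - 1, by lia⟩
    rw [genBernoulli_half, even_case, show 2 * m + 2 - 2 = 2 * m by lia,
      show (2 * m + 2) / 2 + 1 = m + 2 by lia, pow_add, neg_one_sq, mul_one]
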